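/- Let η > 0 and v(p) = p/√(1+p²). Let f : ℝ × ℝ × ℝ → ℝ be continuously differentiable, 1-periodic in its second argument, with f(t,x,p) = 0 whenever |p| ≥ P for some P > 0; define ρ(t,x) := ∫_ℝ f(t,x,p) dp and j(t,x) := ∫_ℝ v(p)·f(t,x,p) dp. Let A, B, 𝓔, E : ℝ × ℝ → ℝ be continuously differentiable and 1-periodic in their second argument, and assume at every point: the Vlasov equation ∂f/∂t + v(p)·∂f/∂x + F·∂f/∂p = 0 with F = −(E + A·B); the Maxwell equations ∂A/∂t = −𝓔, B = ∂A/∂x, ∂B/∂t = −∂𝓔/∂x, ∂𝓔/∂t = η⁻²·A·ρ − ∂B/∂x; and the Ampère relation ∂E/∂t = η⁻²·j. Then the total energy W(t) := (1/2)∫₀¹ A²ρ dx + (η²/2)∫₀¹ (𝓔² + B²) dx + ∫₀¹∫_ℝ (√(1+p²) − 1) f dp dx + (η²/2)∫₀¹ E² dx is constant in t. -/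

import Mathlib

open MeasureTheory

/-!
The energy density
`u = ½ A² ρ + (η²/2)(𝓔² + B²) + ∫ (√(1+p²) - 1) f dp + (η²/2) E²`
satisfies the local conservation law `∂ₜ u + ∂ₓ g = 0` with the 1-periodic flux
`g = ½ A² j + η² 𝓔 B + ∫ (√(1+p²) - 1) v f dp`,
so its integral over a period does not depend on time (`integral_eq_of_conservation_law`).

The conservation law is obtained from the moments `∫ w(p) f dp` of the Vlasov equation: integrating
by parts in `p`, where the boundary terms vanish by compact support, gives
`∂ₜ ∫ w f + ∂ₓ ∫ w v f = F ∫ w' f` (`vlasov_moment`). The weight `w = 1` yields the continuity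
equation `∂ₜ ρ + ∂ₓ j = 0`, and `w = √(1+p²) - 1`, for which `w' = v`, yields the kinetic energy
balance with source `F j = -(E + A B) j`. This source is compensated by `η² E ∂ₜE = E j` and by the
term `A (∂ₓA) j = A B j` in the derivative of `½ A² j`. Differentiation of the moments in `t` and
`x` is differentiation under an integral over `[-P, P]` (`hasDerivAt_integral_param`).
-/

/-- Differentiation under the integral sign over a compact interval, for an integrand whose partial
derivative in the parameter is jointly continuous. -/
lemma hasDerivAt_integral_param {h h' : ℝ → ℝ → ℝ} {a b : ℝ}
    (hc : ∀ s, Continuous (h s)) (hc' : Continuous (Function.uncurry h'))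
    (hd : ∀ s y, HasDerivAt (fun r => h r y) (h' s y) s) (s₀ : ℝ) :
    HasDerivAt (fun s => ∫ y in a..b, h s y) (∫ y in a..b, h' s₀ y) s₀ := by
  obtain ⟨C, hC⟩ := ((isCompact_closedBall s₀ 1).prod
    (isCompact_uIcc (a := a) (b := b))).exists_bound_of_continuousOn hc'.continuousOn
  refine (intervalIntegral.hasDerivAt_integral_of_dominated_loc_of_deriv_le
    (F := h) (F' := h') (bound := fun _ => C)
    (Metric.closedBall_mem_nhds s₀ one_pos) ?_ ?_ ?_ ?_ ?_ ?_).2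
  · exact Filter.Eventually.of_forall fun s => (hc s).aestronglyMeasurable
  · exact (hc s₀).intervalIntegrable _ _
  · exact (hc'.comp (by fun_prop : Continuous fun y : ℝ => (s₀, y))).aestronglyMeasurable
  · exact Filter.Eventually.of_forall fun y hy s hs =>
      hC (s, y) ⟨hs, Set.uIoc_subset_uIcc hy⟩
  · exact intervalIntegrable_const
  · exact Filter.Eventually.of_forall fun y _ s _ => hd s y

/-- A density `u` with `∂ₜ u = -∂ₓ g` for a flux `g` taking equal values at both ends of `[0, 1]`
has a time-independent integral. -/
lemma integral_eq_of_conservation_law {u u' g : ℝ → ℝ → ℝ}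
    (hc : ∀ t, Continuous (u t)) (hc' : Continuous (Function.uncurry u'))
    (hu : ∀ t x, HasDerivAt (fun s => u s x) (u' t x) t)
    (hg : ∀ t x, HasDerivAt (g t) (-u' t x) x) (hper : ∀ t, g t 1 = g t 0) (t₁ t₂ : ℝ) :
    ∫ x in (0:ℝ)..1, u t₁ x = ∫ x in (0:ℝ)..1, u t₂ x := by
  have hd : ∀ t, HasDerivAt (fun s => ∫ x in (0:ℝ)..1, u s x) 0 t := by
    intro t
    have h0 : ∫ x in (0:ℝ)..1, u' t x = 0 := by
      have hct : Continuous (u' t) := hc'.comp (by fun_prop : Continuous fun y : ℝ => (t, y))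
      have := intervalIntegral.integral_eq_sub_of_hasDerivAt (a := 0) (b := 1)
        (fun x _ => hg t x) (hct.neg.intervalIntegrable _ _)
      rw [intervalIntegral.integral_neg, hper, sub_self, neg_eq_zero] at this
      exact this
    simpa [h0] using hasDerivAt_integral_param hc hc' hu t (a := 0) (b := 1)
  exact is_const_of_deriv_eq_zero (fun t => (hd t).differentiableAt) (fun t => (hd t).deriv) t₁ t₂

lemma hasDerivAt_fst_two {g : ℝ × ℝ → ℝ} (hg : ContDiff ℝ 1 g) (t x : ℝ) :
    HasDerivAt (fun s => g (s, x)) (deriv (fun s => g (s, x)) t) t := by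
  have : Differentiable ℝ g := hg.differentiable one_ne_zero
  exact DifferentiableAt.hasDerivAt (by fun_prop)

lemma hasDerivAt_snd_two {g : ℝ × ℝ → ℝ} (hg : ContDiff ℝ 1 g) (t x : ℝ) :
    HasDerivAt (fun y => g (t, y)) (deriv (fun y => g (t, y)) x) x := by
  have : Differentiable ℝ g := hg.differentiable one_ne_zero
  exact DifferentiableAt.hasDerivAt (by fun_prop)

lemma continuous_deriv_snd_two {g : ℝ × ℝ → ℝ} (hg : ContDiff ℝ 1 g) :
    Continuous (fun z : ℝ × ℝ => deriv (fun y => g (z.1, y)) z.2) := by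
  have hd : Differentiable ℝ g := hg.differentiable one_ne_zero
  have hc : Continuous (fderiv ℝ g) := hg.continuous_fderiv one_ne_zero
  have : (fun z : ℝ × ℝ => deriv (fun y => g (z.1, y)) z.2)
      = fun z => fderiv ℝ g z (0, 1) := by
    funext z
    exact ((hd z).hasFDerivAt.comp_hasDerivAt z.2
      ((hasDerivAt_const z.2 z.1).prodMk (hasDerivAt_id z.2))).deriv
  rw [this]
  fun_prop

lemma hasDerivAt_t_three {f : ℝ × ℝ × ℝ → ℝ} (hf : ContDiff ℝ 1 f) (t x p : ℝ) :
    HasDerivAt (fun s => f (s, x, p)) (deriv (fun s => f (s, x, p)) t) t := by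
  have : Differentiable ℝ f := hf.differentiable one_ne_zero
  exact DifferentiableAt.hasDerivAt (by fun_prop)

lemma hasDerivAt_x_three {f : ℝ × ℝ × ℝ → ℝ} (hf : ContDiff ℝ 1 f) (t x p : ℝ) :
    HasDerivAt (fun y => f (t, y, p)) (deriv (fun y => f (t, y, p)) x) x := by
  have : Differentiable ℝ f := hf.differentiable one_ne_zero
  exact DifferentiableAt.hasDerivAt (by fun_prop)

lemma hasDerivAt_p_three {f : ℝ × ℝ × ℝ → ℝ} (hf : ContDiff ℝ 1 f) (t x p : ℝ) :
    HasDerivAt (fun q => f (t, x, q)) (deriv (fun q => f (t, x, q)) p) p := by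
  have : Differentiable ℝ f := hf.differentiable one_ne_zero
  exact DifferentiableAt.hasDerivAt (by fun_prop)

lemma continuous_deriv_t_three {f : ℝ × ℝ × ℝ → ℝ} (hf : ContDiff ℝ 1 f) :
    Continuous (fun z : ℝ × ℝ × ℝ => deriv (fun s => f (s, z.2.1, z.2.2)) z.1) := by
  have hd : Differentiable ℝ f := hf.differentiable one_ne_zero
  have hc : Continuous (fderiv ℝ f) := hf.continuous_fderiv one_ne_zero
  have : (fun z : ℝ × ℝ × ℝ => deriv (fun s => f (s, z.2.1, z.2.2)) z.1)
      = fun z => fderiv ℝ f z (1, 0, 0) := by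
    funext z
    exact ((hd z).hasFDerivAt.comp_hasDerivAt z.1
      ((hasDerivAt_id z.1).prodMk
        ((hasDerivAt_const z.1 z.2.1).prodMk (hasDerivAt_const z.1 z.2.2)))).deriv
  rw [this]
  fun_prop

lemma continuous_deriv_x_three {f : ℝ × ℝ × ℝ → ℝ} (hf : ContDiff ℝ 1 f) :
    Continuous (fun z : ℝ × ℝ × ℝ => deriv (fun y => f (z.1, y, z.2.2)) z.2.1) := by
  have hd : Differentiable ℝ f := hf.differentiable one_ne_zero
  have hc : Continuous (fderiv ℝ f) := hf.continuous_fderiv one_ne_zero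
  have : (fun z : ℝ × ℝ × ℝ => deriv (fun y => f (z.1, y, z.2.2)) z.2.1)
      = fun z => fderiv ℝ f z (0, 1, 0) := by
    funext z
    exact ((hd z).hasFDerivAt.comp_hasDerivAt z.2.1
      ((hasDerivAt_const z.2.1 z.1).prodMk
        ((hasDerivAt_id z.2.1).prodMk (hasDerivAt_const z.2.1 z.2.2)))).deriv
  rw [this]
  fun_prop

lemma continuous_deriv_p_three {f : ℝ × ℝ × ℝ → ℝ} (hf : ContDiff ℝ 1 f) :
    Continuous (fun z : ℝ × ℝ × ℝ => deriv (fun q => f (z.1, z.2.1, q)) z.2.2) := by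
  have hd : Differentiable ℝ f := hf.differentiable one_ne_zero
  have hc : Continuous (fderiv ℝ f) := hf.continuous_fderiv one_ne_zero
  have : (fun z : ℝ × ℝ × ℝ => deriv (fun q => f (z.1, z.2.1, q)) z.2.2)
      = fun z => fderiv ℝ f z (0, 0, 1) := by
    funext z
    exact ((hd z).hasFDerivAt.comp_hasDerivAt z.2.2
      ((hasDerivAt_const z.2.2 z.1).prodMk
        ((hasDerivAt_const z.2.2 z.2.1).prodMk (hasDerivAt_id z.2.2)))).deriv
  rw [this]
  fun_prop

/-- The `p`-moment of `f` with weight `w`, restricted to `[-P, P]`. -/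
noncomputable def moment (P : ℝ) (w : ℝ → ℝ) (f : ℝ × ℝ × ℝ → ℝ) (t x : ℝ) : ℝ :=
  ∫ p in (-P)..P, w p * f (t, x, p)

/-- The `p`-moment of `∂ₓ f` with weight `w`, restricted to `[-P, P]`. -/
noncomputable def momentX (P : ℝ) (w : ℝ → ℝ) (f : ℝ × ℝ × ℝ → ℝ) (t x : ℝ) : ℝ :=
  ∫ p in (-P)..P, w p * deriv (fun y => f (t, y, p)) x

lemma integral_eq_moment {P : ℝ} {f : ℝ × ℝ × ℝ → ℝ} (w : ℝ → ℝ)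
    (hsupp : ∀ t x p : ℝ, P ≤ |p| → f (t, x, p) = 0) (t x : ℝ) :
    ∫ p, w p * f (t, x, p) = moment P w f t x := by
  refine (intervalIntegral.integral_eq_integral_of_support_subset ?_).symm
  intro p hp
  have : |p| < P := by
    by_contra! h
    exact hp (by simp [hsupp t x p h])
  exact ⟨(abs_lt.1 this).1, (abs_lt.1 this).2.le⟩

lemma continuous_moment {f : ℝ × ℝ × ℝ → ℝ} (P : ℝ) {w : ℝ → ℝ} (hf : Continuous f)
    (hw : Continuous w) : Continuous (fun z : ℝ × ℝ => moment P w f z.1 z.2) := by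
  unfold moment
  exact intervalIntegral.continuous_parametric_intervalIntegral_of_continuous'
    (f := fun (z : ℝ × ℝ) p => w p * f (z.1, z.2, p))
    (by unfold Function.uncurry; fun_prop) _ _

lemma continuous_momentX {f : ℝ × ℝ × ℝ → ℝ} (P : ℝ) {w : ℝ → ℝ} (hf : ContDiff ℝ 1 f)
    (hw : Continuous w) : Continuous (fun z : ℝ × ℝ => momentX P w f z.1 z.2) := by
  unfold momentX
  refine intervalIntegral.continuous_parametric_intervalIntegral_of_continuous'
    (f := fun (z : ℝ × ℝ) p => w p * deriv (fun y => f (z.1, y, p)) z.2) ?_ _ _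
  exact (hw.comp continuous_snd).mul ((continuous_deriv_x_three hf).comp
    (by fun_prop : Continuous fun q : (ℝ × ℝ) × ℝ => (q.1.1, q.1.2, q.2)))

lemma hasDerivAt_moment_x {f : ℝ × ℝ × ℝ → ℝ} (P : ℝ) {w : ℝ → ℝ} (hf : ContDiff ℝ 1 f)
    (hw : Continuous w) (t x : ℝ) :
    HasDerivAt (fun y => moment P w f t y) (momentX P w f t x) x := by
  have hfc := hf.continuous
  refine hasDerivAt_integral_param (h := fun y p => w p * f (t, y, p))
    (h' := fun y p => w p * deriv (fun y => f (t, y, p)) y) (fun y => by fun_prop) ?_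
    (fun y p => (hasDerivAt_x_three hf t y p).const_mul _) x
  exact (hw.comp continuous_snd).mul ((continuous_deriv_x_three hf).comp
    (by fun_prop : Continuous fun q : ℝ × ℝ => (t, q.1, q.2)))

/-- The moment of the Vlasov equation with weight `w`:
`∂ₜ ∫ w f = -∂ₓ ∫ w v f + F ∫ w' f`, where the force `F` does not depend on `p`. -/
lemma vlasov_moment {f : ℝ × ℝ × ℝ → ℝ} {P : ℝ} {v w w' : ℝ → ℝ} {F : ℝ × ℝ → ℝ}
    (hf : ContDiff ℝ 1 f) (hsupp : ∀ t x p : ℝ, P ≤ |p| → f (t, x, p) = 0)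
    (hv : Continuous v) (hw : ∀ p, HasDerivAt w (w' p) p) (hw' : Continuous w')
    (hPDE : ∀ t x p : ℝ, deriv (fun s => f (s, x, p)) t
      + v p * deriv (fun y => f (t, y, p)) x + F (t, x) * deriv (fun q => f (t, x, q)) p = 0)
    (t x : ℝ) :
    HasDerivAt (fun s => moment P w f s x)
      (-momentX P (fun p => w p * v p) f t x + F (t, x) * moment P w' f t x) t := by
  have hfc := hf.continuous
  have hwc : Continuous w := continuous_iff_continuousAt.2 fun p => (hw p).continuousAt
  have hcx : Continuous fun p => deriv (fun y => f (t, y, p)) x :=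
    (continuous_deriv_x_three hf).comp (by fun_prop : Continuous fun p : ℝ => (t, x, p))
  have hcp : Continuous fun p => deriv (fun q => f (t, x, q)) p :=
    (continuous_deriv_p_three hf).comp (by fun_prop : Continuous fun p : ℝ => (t, x, p))
  have hmain := hasDerivAt_integral_param (a := -P) (b := P)
    (h := fun s p => w p * f (s, x, p))
    (h' := fun s p => w p * deriv (fun s => f (s, x, p)) s) (fun s => by fun_prop)
    ((hwc.comp continuous_snd).mul ((continuous_deriv_t_three hf).comp
      (by fun_prop : Continuous fun q : ℝ × ℝ => (q.1, x, q.2))))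
    (fun s p => (hasDerivAt_t_three hf s x p).const_mul _) t
  have hparts := intervalIntegral.integral_mul_deriv_eq_deriv_mul (a := -P) (b := P)
    (fun p _ => hw p) (fun p _ => hasDerivAt_p_three hf t x p)
    (hw'.intervalIntegrable _ _) (hcp.intervalIntegrable _ _)
  rw [hsupp t x P (le_abs_self P), hsupp t x (-P) (by rw [abs_neg]; exact le_abs_self P)]
    at hparts
  have heq : ∫ p in (-P)..P, w p * deriv (fun s => f (s, x, p)) t
      = -momentX P (fun p => w p * v p) f t x + F (t, x) * moment P w' f t x := by
    have h1 : ∀ p, w p * deriv (fun s => f (s, x, p)) t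
        = -(w p * v p * deriv (fun y => f (t, y, p)) x)
          - F (t, x) * (w p * deriv (fun q => f (t, x, q)) p) := fun p => by
      linear_combination w p * hPDE t x p
    simp only [h1]
    rw [intervalIntegral.integral_sub
      (Continuous.intervalIntegrable (by fun_prop) _ _)
      (Continuous.intervalIntegrable (by fun_prop) _ _), intervalIntegral.integral_neg,
      intervalIntegral.integral_const_mul, hparts]
    simp only [momentX, moment]
    ring
  rw [← heq]
  exact hmain

lemma hasDerivAt_sqrt_one_add_sq (p : ℝ) :
    HasDerivAt (fun q : ℝ => Real.sqrt (1 + q ^ 2) - 1) (p / Real.sqrt (1 + p ^ 2)) p := by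
  have h0 : (1 + p ^ 2) ≠ 0 := by positivity
  have h := (((hasDerivAt_pow 2 p).const_add 1).sqrt h0).sub_const 1
  refine h.congr_deriv ?_
  simp only [Nat.cast_ofNat, Nat.add_one_sub_one, pow_one]
  rw [mul_div_mul_left _ _ two_ne_zero]

/-- Conservation of the total energy (transverse kinetic + transverse potential
+ longitudinal kinetic + longitudinal potential) for the quasi-relativistic
Vlasov–Maxwell system. -/
theorem total_energy_conservation
    (η : ℝ) (hη : 0 < η)
    (v : ℝ → ℝ) (hv : ∀ p : ℝ, v p = p / Real.sqrt (1 + p ^ 2))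
    (f : ℝ × ℝ × ℝ → ℝ) (hf : ContDiff ℝ 1 f)
    (hfper : ∀ t x p : ℝ, f (t, x + 1, p) = f (t, x, p))
    (P : ℝ) (hP : 0 < P)
    (hsupp : ∀ t x p : ℝ, P ≤ |p| → f (t, x, p) = 0)
    (A B Etr E : ℝ × ℝ → ℝ)
    (hA : ContDiff ℝ 1 A) (hB : ContDiff ℝ 1 B)
    (hEtr : ContDiff ℝ 1 Etr) (hE : ContDiff ℝ 1 E)
    (hAper : ∀ t x : ℝ, A (t, x + 1) = A (t, x))
    (hBper : ∀ t x : ℝ, B (t, x + 1) = B (t, x))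
    (hEtrper : ∀ t x : ℝ, Etr (t, x + 1) = Etr (t, x))
    (hEper : ∀ t x : ℝ, E (t, x + 1) = E (t, x))
    (hPDE : ∀ t x p : ℝ,
      deriv (fun s => f (s, x, p)) t
        + v p * deriv (fun y => f (t, y, p)) x
        + (-(E (t, x) + A (t, x) * B (t, x))) * deriv (fun q => f (t, x, q)) p
        = 0)
    (hAt : ∀ t x : ℝ, deriv (fun s => A (s, x)) t = -Etr (t, x))
    (hBdef : ∀ t x : ℝ, B (t, x) = deriv (fun y => A (t, y)) x)
    (hBt : ∀ t x : ℝ,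
      deriv (fun s => B (s, x)) t = -deriv (fun y => Etr (t, y)) x)
    (hEtrt : ∀ t x : ℝ,
      deriv (fun s => Etr (s, x)) t =
        η⁻¹ ^ 2 * A (t, x) * (∫ p : ℝ, f (t, x, p))
          - deriv (fun y => B (t, y)) x)
    (hAmpere : ∀ t x : ℝ,
      deriv (fun s => E (s, x)) t =
        η⁻¹ ^ 2 * ∫ p : ℝ, v p * f (t, x, p)) :
    ∀ t₁ t₂ : ℝ,
      ((1 / 2) * (∫ x in (0:ℝ)..1, A (t₁, x) ^ 2 * ∫ p : ℝ, f (t₁, x, p))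
        + (η ^ 2 / 2) * (∫ x in (0:ℝ)..1, (Etr (t₁, x) ^ 2 + B (t₁, x) ^ 2))
        + (∫ x in (0:ℝ)..1, ∫ p : ℝ, (Real.sqrt (1 + p ^ 2) - 1) * f (t₁, x, p))
        + (η ^ 2 / 2) * ∫ x in (0:ℝ)..1, E (t₁, x) ^ 2)
      = ((1 / 2) * (∫ x in (0:ℝ)..1, A (t₂, x) ^ 2 * ∫ p : ℝ, f (t₂, x, p))
        + (η ^ 2 / 2) * (∫ x in (0:ℝ)..1, (Etr (t₂, x) ^ 2 + B (t₂, x) ^ 2))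
        + (∫ x in (0:ℝ)..1, ∫ p : ℝ, (Real.sqrt (1 + p ^ 2) - 1) * f (t₂, x, p))
        + (η ^ 2 / 2) * ∫ x in (0:ℝ)..1, E (t₂, x) ^ 2) := by
  intro t₁ t₂
  have hvc : Continuous v := by
    have : v = fun p => p / Real.sqrt (1 + p ^ 2) := funext hv
    rw [this]
    exact continuous_id.div (by fun_prop) fun p => by positivity
  set γ : ℝ → ℝ := fun p => Real.sqrt (1 + p ^ 2) - 1 with hγ
  have hγc : Continuous γ := by fun_prop
  have hγd : ∀ p, HasDerivAt γ (v p) p := fun p => by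
    rw [hv]; exact hasDerivAt_sqrt_one_add_sq p
  have hρ : ∀ t x, ∫ p, f (t, x, p) = moment P (fun _ => 1) f t x := fun t x => by
    simpa using integral_eq_moment (fun _ => 1) hsupp t x
  have hj := integral_eq_moment v hsupp
  have hk := integral_eq_moment γ hsupp
  have hρt := vlasov_moment (w := fun _ => 1) (w' := fun _ => 0)
    (F := fun z => -(E z + A z * B z)) hf hsupp hvc
    (fun p => hasDerivAt_const p 1) continuous_const hPDE
  have hkt := vlasov_moment (F := fun z => -(E z + A z * B z)) hf hsupp hvc hγd hvc hPDE
  have hjx := hasDerivAt_moment_x P hf hvc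
  have hγv : Continuous fun p => γ p * v p := hγc.mul hvc
  have hqx := hasDerivAt_moment_x P hf hγv
  have hρc := continuous_moment P hf.continuous (continuous_const (y := (1:ℝ)) (X := ℝ))
  have hjc := continuous_moment P hf.continuous hvc
  have hkc := continuous_moment P hf.continuous hγc
  have hjxc := continuous_momentX P hf hvc
  have hqxc := continuous_momentX P hf hγv
  have hAc := hA.continuous
  have hBc := hB.continuous
  have hEc := hE.continuous
  have hTc := hEtr.continuous
  have hBxc := continuous_deriv_snd_two hB
  have hTxc := continuous_deriv_snd_two hEtr
  simp only [one_mul, hρ, hj] at hρt hEtrt hAmpere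
  have hmper : ∀ w t, moment P w f t 1 = moment P w f t 0 := fun w t => by
    have h : ∀ p, f (t, 1, p) = f (t, 0, p) := fun p => by simpa using hfper t 0 p
    simp only [moment, h]
  have hslice : ∀ {g : ℝ × ℝ → ℝ}, Continuous g → ∀ t, Continuous fun x => g (t, x) :=
    fun hg t => hg.comp (by fun_prop)
  have hcons := integral_eq_of_conservation_law
    (u := fun t x => (1 / 2) * (A (t, x) ^ 2 * moment P (fun _ => 1) f t x)
      + (η ^ 2 / 2) * (Etr (t, x) ^ 2 + B (t, x) ^ 2) + moment P γ f t x
      + (η ^ 2 / 2) * E (t, x) ^ 2)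
    (u' := fun t x => -(A (t, x) * B (t, x) * moment P v f t x
      + (1 / 2) * A (t, x) ^ 2 * momentX P v f t x
      + η ^ 2 * (deriv (fun y => Etr (t, y)) x * B (t, x)
        + Etr (t, x) * deriv (fun y => B (t, y)) x)
      + momentX P (fun p => γ p * v p) f t x))
    (g := fun t x => (1 / 2) * A (t, x) ^ 2 * moment P v f t x
      + η ^ 2 * (Etr (t, x) * B (t, x)) + moment P (fun p => γ p * v p) f t x)
    ?_ ?_ ?_ ?_ ?_ t₁ t₂
  · have hint : ∀ t, ∫ x in (0:ℝ)..1, ((1 / 2) * (A (t, x) ^ 2 * moment P (fun _ => 1) f t x)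
      + (η ^ 2 / 2) * (Etr (t, x) ^ 2 + B (t, x) ^ 2) + moment P γ f t x
      + (η ^ 2 / 2) * E (t, x) ^ 2) =
        (1 / 2) * (∫ x in (0:ℝ)..1, A (t, x) ^ 2 * ∫ p : ℝ, f (t, x, p))
        + (η ^ 2 / 2) * (∫ x in (0:ℝ)..1, (Etr (t, x) ^ 2 + B (t, x) ^ 2))
        + (∫ x in (0:ℝ)..1, ∫ p : ℝ, (Real.sqrt (1 + p ^ 2) - 1) * f (t, x, p))
        + (η ^ 2 / 2) * ∫ x in (0:ℝ)..1, E (t, x) ^ 2 := by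
      intro t
      have hk' : ∀ x, ∫ p : ℝ, (Real.sqrt (1 + p ^ 2) - 1) * f (t, x, p)
        = moment P γ f t x := hk t
      simp only [hρ, hk']
      have c1 := hslice hρc t
      have c2 := hslice hkc t
      dsimp only at c1 c2
      rw [intervalIntegral.integral_add (Continuous.intervalIntegrable (by fun_prop) _ _)
          (Continuous.intervalIntegrable (by fun_prop) _ _),
        intervalIntegral.integral_add (Continuous.intervalIntegrable (by fun_prop) _ _)
          (Continuous.intervalIntegrable (by fun_prop) _ _),
        intervalIntegral.integral_add (Continuous.intervalIntegrable (by fun_prop) _ _)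
          (Continuous.intervalIntegrable (by fun_prop) _ _)]
      simp only [intervalIntegral.integral_const_mul]
    rw [← hint t₁, ← hint t₂]
    exact hcons
  · intro t
    have c1 := hslice hρc t
    have c2 := hslice hkc t
    dsimp only at c1 c2
    fun_prop
  · unfold Function.uncurry
    fun_prop
  · intro t x
    have dA := hasDerivAt_fst_two hA t x
    have dB := hasDerivAt_fst_two hB t x
    have dT := hasDerivAt_fst_two hEtr t x
    have dE := hasDerivAt_fst_two hE t x
    rw [hAt] at dA
    rw [hBt] at dB
    rw [hEtrt] at dT
    rw [hAmpere] at dE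
    have h := (((((dA.pow 2).mul (hρt t x)).const_mul (1 / 2)).add
      (((dT.pow 2).add (dB.pow 2)).const_mul (η ^ 2 / 2))).add (hkt t x)).add
      ((dE.pow 2).const_mul (η ^ 2 / 2))
    refine h.congr_deriv ?_
    have h0 : moment P (fun _ => 0) f t x = 0 := by simp [moment]
    simp only [h0, Pi.pow_apply]
    field_simp
    ring
  · intro t x
    have dA := hasDerivAt_snd_two hA t x
    rw [← hBdef] at dA
    have h := (((dA.pow 2).const_mul (1 / 2)).mul (hjx t x)).add
      (((hasDerivAt_snd_two hEtr t x).mul (hasDerivAt_snd_two hB t x)).const_mul (η ^ 2)) |>.add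
      (hqx t x)
    refine h.congr_deriv ?_
    simp only [Pi.pow_apply]
    ring
  · intro t
    have a := hAper t 0
    have b := hBper t 0
    have c := hEtrper t 0
    rw [zero_add] at a b c
    simp only [a, b, c, hmper]
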